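/- Let Γ be a set of temporal valued relations on ℚ such that the crisp binary relation < belongs to ⟨Γ⟩, every crisp relation in ⟨Γ⟩ is preserved by every lex-operation, and some lex-operation fails to improve some relation of Γ. Then the crisp relation Cyc belongs to ⟨Γ⟩. -/

import Mathlib

/-!
For finitely many coordinates there are only finitely many order types, and `ℚ` is homogeneous
(`exists_autom`), so a temporal relation depends only on the order type of its argument and has
finite range.

Suppose a lex-operation `l` does not improve `R ∈ Γ`, witnessed by `s` and `t`, and put
`u = l(s, t)`. As `Feas(R)` is preserved by `l`, the value `R u` is finite, and then `R w < R u`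
for `w = s` or `w = t`. Moreover `l` is injective, so `w` identifies all the coordinates that `u`
identifies. Restrict `R` to the tuples with the latter property and impose the inequalities
`x i < x j` that hold in `u` one after the other. In the end only the order type of `u` is left, so
at some step, with current domain `F`, there are tuples of value below `R u` in `F`, but none with
`w i < w j`, where `u i < u j` (`Clone.cyc_of_lt`). Let `m` be the minimum of `R` on `F`. The
projection

  `G(x, y) = inf {R w | w ∈ F, w j = x, w i < y}`

equals `m` if `x < y` (rescale a minimiser), and `R u > m` if `y ≤ x`, since then `w i < w j`
(`Clone.cyc_of_pair`). Finally `G(x, y) + G(y, z) + G(z, x)` is minimal exactly on `Cyc`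
(`Clone.cyc_of_indicator`), so `Opt` produces `Cyc`.
-/

open Classical

/-- A valued relation of arity `k` on `ℚ`. -/
abbrev VRel (k : ℕ) : Type := (Fin k → ℚ) → WithTop ℚ

/-- The crisp valued relation associated to a set of tuples: `0` on the set, `∞` off it. -/
noncomputable def crisp {k : ℕ} (S : Set (Fin k → ℚ)) : VRel k :=
  fun t => if t ∈ S then 0 else ⊤

/-- A unary operation improves a valued relation. -/
def Improves1 (f : ℚ → ℚ) {k : ℕ} (R : VRel k) : Prop :=
  ∀ t : Fin k → ℚ, R (fun i => f (t i)) ≤ R t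

/-- A binary operation improves a valued relation: `2·R(g(s,t)) ≤ R(s) + R(t)`. -/
def Improves2 (g : ℚ → ℚ → ℚ) {k : ℕ} (R : VRel k) : Prop :=
  ∀ s t : Fin k → ℚ, 2 • R (fun i => g (s i) (t i)) ≤ R s + R t

/-- A valued relation is temporal if it is invariant under all order-preserving
bijections of `ℚ`. -/
def Temporal {k : ℕ} (R : VRel k) : Prop :=
  ∀ α : ℚ → ℚ, Function.Bijective α → StrictMono α →
    ∀ t : Fin k → ℚ, R (fun i => α (t i)) = R t

/-- A valued relation is `Sym(ℚ)`-invariant if it is invariant under all bijections of `ℚ`. -/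
def SymInvariant {k : ℕ} (R : VRel k) : Prop :=
  ∀ α : ℚ → ℚ, Function.Bijective α →
    ∀ t : Fin k → ℚ, R (fun i => α (t i)) = R t

/-- The valued relational clone generated by a set `Γ` of valued relations on `ℚ`:
the smallest set of valued relations containing `Γ`, crisp equality and the crisp empty
unary relation, closed under sums of atomic expressions, projection (infimum over extra
coordinates), shifting, nonnegative scaling, `Feas` and `Opt`. -/
inductive Clone (Γ : Set ((k : ℕ) × VRel k)) : {k : ℕ} → VRel k → Prop where
  | base {k : ℕ} {R : VRel k} : Sigma.mk k R ∈ Γ → Clone Γ R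
  | eqRel : Clone Γ (crisp {t : Fin 2 → ℚ | t 0 = t 1})
  | emptyRel : Clone Γ (crisp (∅ : Set (Fin 1 → ℚ)))
  | sum {m n : ℕ} {k : Fin m → ℕ} {R : ∀ i : Fin m, VRel (k i)}
      (σ : ∀ i : Fin m, Fin (k i) → Fin n) :
      (∀ i : Fin m, Clone Γ (R i)) →
      Clone Γ (fun x : Fin n → ℚ => ∑ i : Fin m, R i (fun j => x (σ i j)))
  | proj {k n : ℕ} {R : VRel (k + n)} {R' : VRel k} :
      Clone Γ R →
      (∀ s : Fin k → ℚ,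
        IsGLB {v : WithTop ℚ | ∃ t : Fin n → ℚ, v = R (Fin.append s t)} (R' s)) →
      Clone Γ R'
  | shift {k : ℕ} {R : VRel k} (c : ℚ) :
      Clone Γ R → Clone Γ (fun t => R t + (c : WithTop ℚ))
  | scale {k : ℕ} {R : VRel k} (q : ℚ) (hq : 0 ≤ q) :
      Clone Γ R → Clone Γ (fun t => (q : WithTop ℚ) * R t)
  | feas {k : ℕ} {R : VRel k} :
      Clone Γ R → Clone Γ (fun t => if R t ≠ ⊤ then 0 else ⊤)
  | opt {k : ℕ} {R : VRel k} :
      Clone Γ R → Clone Γ (fun t => if R t ≠ ⊤ ∧ ∀ s, R t ≤ R s then 0 else ⊤)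

/-- The crisp binary order relation `<` on `ℚ`. -/
def LtS : Set (Fin 2 → ℚ) := {t | t 0 < t 1}

/-- The crisp binary disequality relation on `ℚ`. -/
def NeS : Set (Fin 2 → ℚ) := {t | t 0 ≠ t 1}

def BetwS : Set (Fin 3 → ℚ) :=
  {t | (t 0 < t 1 ∧ t 1 < t 2) ∨ (t 2 < t 1 ∧ t 1 < t 0)}

def CycS : Set (Fin 3 → ℚ) :=
  {t | (t 0 < t 1 ∧ t 1 < t 2) ∨ (t 1 < t 2 ∧ t 2 < t 0) ∨ (t 2 < t 0 ∧ t 0 < t 1)}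

/-- `c` lies strictly between `a` and `b`. -/
def StrictBetween (a b c : ℚ) : Prop := (a < c ∧ c < b) ∨ (b < c ∧ c < a)

def SepS : Set (Fin 4 → ℚ) :=
  {t | Function.Injective t ∧
    Xor' (StrictBetween (t 0) (t 1) (t 2)) (StrictBetween (t 0) (t 1) (t 3))}

def T3S : Set (Fin 3 → ℚ) :=
  {t | (t 0 = t 1 ∧ t 1 < t 2) ∨ (t 0 = t 2 ∧ t 2 < t 1)}

def NegT3S : Set (Fin 3 → ℚ) := {t | (fun i => -(t i)) ∈ T3S}

def DisS : Set (Fin 3 → ℚ) :=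
  {t | (t 0 = t 1 ∧ t 1 ≠ t 2) ∨ (t 0 ≠ t 1 ∧ t 1 = t 2)}

/-- The binary valued relation `R_{α,β,γ}` on `ℚ`. -/
noncomputable def Rabc (a b c : WithTop ℚ) : VRel 2 :=
  fun t => if t 0 = t 1 then a else if t 0 < t 1 then b else c

/-- A lex-operation on `ℚ`. -/
def IsLex (l : ℚ → ℚ → ℚ) : Prop :=
  ∀ x x' y y' : ℚ, l x y < l x' y' ↔ (x < x' ∨ (x = x' ∧ y < y'))

/-- The dual of a binary operation on `ℚ`. -/
def dualOp (g : ℚ → ℚ → ℚ) : ℚ → ℚ → ℚ := fun x y => -g (-x) (-y)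

/-- Operations of `mx` type. -/
def IsMx (g : ℚ → ℚ → ℚ) : Prop :=
  ∃ ene eeq : ℚ → ℚ, StrictMono ene ∧ StrictMono eeq ∧
    (∀ x ε : ℚ, 0 < ε → ene x < eeq x ∧ eeq x < ene (x + ε)) ∧
    ∀ x y : ℚ, g x y = if x = y then eeq x else ene (min x y)

/-- Operations of `mi` type. -/
def IsMi (g : ℚ → ℚ → ℚ) : Prop :=
  ∃ elt eeq egt : ℚ → ℚ, StrictMono elt ∧ StrictMono eeq ∧ StrictMono egt ∧
    (∀ x ε : ℚ, 0 < ε → eeq x < egt x ∧ egt x < elt x ∧ elt x < eeq (x + ε)) ∧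
    ∀ x y : ℚ, g x y = if x < y then elt x else if x = y then eeq x else egt y

/-- Operations of `lele` type. -/
def IsLele (g : ℚ → ℚ → ℚ) : Prop :=
  ∃ eneg epos : ℚ → ℚ, StrictMono eneg ∧ StrictMono epos ∧
    (∀ x, eneg x < 0) ∧ (∀ x, 0 < epos x) ∧
    ∃ l, IsLex l ∧
      ∀ x y : ℚ, g x y = if x ≤ 0 then l (eneg x) (eneg y) else l (epos y) (epos x)

/-- A binary operation preserves a crisp relation (given as a set of tuples). -/
def Pres2 (g : ℚ → ℚ → ℚ) {k : ℕ} (S : Set (Fin k → ℚ)) : Prop :=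
  ∀ s t : Fin k → ℚ, s ∈ S → t ∈ S → (fun i => g (s i) (t i)) ∈ S

/-- The feasibility relation of a valued relation. -/
def FeasSet {k : ℕ} (R : VRel k) : Set (Fin k → ℚ) := {t | R t ≠ ⊤}

/-- The set of minimal-value feasible tuples of a valued relation. -/
def OptSet {k : ℕ} (R : VRel k) : Set (Fin k → ℚ) := {t | R t ≠ ⊤ ∧ ∀ s, R t ≤ R s}

/-- `g` preserves every relation of the crisp structure `Γ̂`, consisting of `Feas(R)`
for `R ∈ Γ` and `Opt(R_σ)` for all minors `R_σ` of relations `R ∈ Γ`. -/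
def PresHat (g : ℚ → ℚ → ℚ) (Γ : Set ((k : ℕ) × VRel k)) : Prop :=
  ∀ p ∈ Γ, Pres2 g (FeasSet p.2) ∧
    ∀ (n : ℕ) (σ : Fin p.1 → Fin n),
      Pres2 g (OptSet (fun x : Fin n → ℚ => p.2 (fun j => x (σ j))))

/-- `g` is min, max, of mx/mi/lele type, or the dual of an mx/mi/lele type operation. -/
def GoodOp (g : ℚ → ℚ → ℚ) : Prop :=
  g = (fun x y => min x y) ∨ g = (fun x y => max x y) ∨ IsMx g ∨ IsMi g ∨ IsLele g ∨
    ∃ h, (IsMx h ∨ IsMi h ∨ IsLele h) ∧ g = dualOp h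

/-- `g` is the constant-zero binary operation, min, max, or of mx/mi/lele type. -/
def BaseOp (g : ℚ → ℚ → ℚ) : Prop :=
  g = (fun _ _ => (0 : ℚ)) ∨ g = (fun x y => min x y) ∨ g = (fun x y => max x y) ∨
    IsMx g ∨ IsMi g ∨ IsLele g

/-! ### Homogeneity of `ℚ` and temporal relations -/

/-- `ℚ` is homogeneous: two finite tuples of the same order type differ by an
order-preserving bijection. -/
theorem exists_autom {k : ℕ} (s t : Fin k → ℚ) (h : ∀ i j, s i < s j ↔ t i < t j) :
    ∃ α : ℚ → ℚ, Function.Bijective α ∧ StrictMono α ∧ ∀ i, α (s i) = t i := by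
  let p : Order.PartialIso ℚ ℚ := ⟨Finset.univ.image fun i => (s i, t i), by
    intro p hp q hq
    simp only [Finset.mem_image, Finset.mem_univ, true_and] at hp hq
    obtain ⟨i, rfl⟩ := hp
    obtain ⟨j, rfl⟩ := hq
    have h1 := h i j
    have h2 := h j i
    rcases lt_trichotomy (s i) (s j) with hs | hs | hs
    · rw [(cmp_eq_lt_iff _ _).2 hs, (cmp_eq_lt_iff _ _).2 (h1.1 hs)]
    · have : t i = t j := by
        apply le_antisymm <;> rw [← not_lt]
        · rw [← h2]; exact hs.le.not_gt
        · rw [← h1]; exact hs.ge.not_gt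
      rw [(cmp_eq_eq_iff _ _).2 hs, (cmp_eq_eq_iff _ _).2 this]
    · rw [(cmp_eq_gt_iff _ _).2 hs, (cmp_eq_gt_iff _ _).2 (h2.1 hs)]⟩
  let to_cofinal : ℚ ⊕ ℚ → Order.Cofinal (Order.PartialIso ℚ ℚ) := fun q =>
    Sum.recOn q (Order.PartialIso.definedAtLeft ℚ) (Order.PartialIso.definedAtRight ℚ)
  let I : Order.Ideal (Order.PartialIso ℚ ℚ) := Order.idealOfCofinals p to_cofinal
  have hp : p ∈ I := Order.mem_idealOfCofinals p to_cofinal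
  let F := fun a => Order.PartialIso.funOfIdeal a I
    (Order.cofinal_meets_idealOfCofinals p to_cofinal (Sum.inl a))
  let G := fun b => Order.PartialIso.invOfIdeal b I
    (Order.cofinal_meets_idealOfCofinals p to_cofinal (Sum.inr b))
  let e : ℚ ≃o ℚ := OrderIso.ofCmpEqCmp (fun a => (F a).1) (fun b => (G b).1) (by
    intro a b
    obtain ⟨f, hf, ha⟩ := (F a).prop
    obtain ⟨g, hg, hb⟩ := (G b).prop
    obtain ⟨m, _, fm, gm⟩ := I.directed _ hf _ hg
    exact m.prop (a, _) (fm ha) (_, b) (gm hb))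
  refine ⟨e, e.bijective, e.strictMono, fun i => ?_⟩
  obtain ⟨f, hf, ha⟩ := (F (s i)).prop
  obtain ⟨m, _, fm, pm⟩ := I.directed _ hf _ hp
  have h1 : (s i, t i) ∈ m.val := pm (Finset.mem_image_of_mem _ (Finset.mem_univ i))
  have := m.prop _ (fm ha) _ h1
  simp only [cmp_self_eq_eq] at this
  exact (cmp_eq_eq_iff _ _).1 this.symm

theorem Temporal.eq_of_orderType {k : ℕ} {R : VRel k} (hR : Temporal R) {s t : Fin k → ℚ}
    (h : ∀ i j, s i < s j ↔ t i < t j) : R s = R t := by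
  obtain ⟨α, hb, hm, hα⟩ := exists_autom s t h
  rw [← hR α hb hm s]
  simp only [hα]

/-- There are finitely many order types of `k`-tuples, hence finitely many values. -/
theorem Temporal.finite_range {k : ℕ} {R : VRel k} (hR : Temporal R) :
    (Set.range R).Finite := by
  let c : (Fin k → ℚ) → Set (Fin k × Fin k) := fun t => {p | t p.1 < t p.2}
  have hf : Function.FactorsThrough R c := fun s t hst =>
    hR.eq_of_orderType fun i j => by
      have := Set.ext_iff.1 hst (i, j)
      simpa [c] using this
  refine (Set.finite_range (Function.extend c R fun _ => 0)).subset ?_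
  rintro _ ⟨t, rfl⟩
  exact ⟨c t, hf.extend_apply _ t⟩

theorem Temporal.affine {k : ℕ} {R : VRel k} (hR : Temporal R) (a b : ℚ) (ha : 0 < a)
    (t : Fin k → ℚ) : R (fun i => a * t i + b) = R t := by
  refine hR (fun x => a * x + b) ⟨?_, ?_⟩ ?_ t
  · intro x y hxy
    simpa [ha.ne'] using hxy
  · intro y
    exact ⟨(y - b) / a, by field_simp; ring⟩
  · intro x y hxy
    simpa [ha] using hxy

/-! ### Closure properties of the clone -/

section Closure

variable {Γ : Set ((k : ℕ) × VRel k)}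

theorem Clone.minor {k n : ℕ} {R : VRel k} (hR : Clone Γ R) (σ : Fin k → Fin n) :
    Clone Γ (fun x : Fin n → ℚ => R fun j => x (σ j)) := by
  have := Clone.sum (Γ := Γ) (m := 1) (k := fun _ => k) (R := fun _ => R)
    (fun _ => σ) (fun _ => hR)
  simpa using this

theorem Clone.zero {n : ℕ} : Clone Γ (fun _ : Fin n → ℚ => 0) := by
  have := Clone.sum (Γ := Γ) (m := 0) (n := n) (k := fun _ => 0) (R := fun _ _ => 0)
    (fun _ => Fin.elim0) (fun i => i.elim0)
  simpa using this

theorem Clone.add {k : ℕ} {R S : VRel k} (hR : Clone Γ R) (hS : Clone Γ S) :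
    Clone Γ (fun x => R x + S x) := by
  have := Clone.sum (Γ := Γ) (m := 2) (k := fun _ => k) (R := ![R, S])
    (fun _ => id) (fun i => by fin_cases i <;> assumption)
  simpa [Fin.sum_univ_two] using this

theorem Clone.inter {k : ℕ} {S T : Set (Fin k → ℚ)} (hS : Clone Γ (crisp S))
    (hT : Clone Γ (crisp T)) : Clone Γ (crisp (S ∩ T)) := by
  convert hS.add hT using 2 with x
  by_cases h1 : x ∈ S <;> by_cases h2 : x ∈ T <;> simp [crisp, h1, h2]

theorem Clone.biInter {k : ℕ} {ι : Type} (A : Finset ι) (S : ι → Set (Fin k → ℚ))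
    (hS : ∀ i ∈ A, Clone Γ (crisp (S i))) : Clone Γ (crisp {x | ∀ i ∈ A, x ∈ S i}) := by
  induction A using Finset.induction_on with
  | empty =>
    convert Clone.zero (Γ := Γ) (n := k) using 2 with x
    simp [crisp]
  | insert a A _ ih =>
    have := (hS a (by simp)).inter (ih fun i hi => hS i (by simp [hi]))
    convert this using 3 with x
    ext x
    simp

theorem Clone.eqAt {n : ℕ} (i j : Fin n) : Clone Γ (crisp {x : Fin n → ℚ | x i = x j}) := by
  convert (Clone.eqRel (Γ := Γ)).minor ![i, j] using 2 with x
  simp [crisp]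

theorem Clone.ltAt (hlt : Clone Γ (crisp LtS)) {n : ℕ} (i j : Fin n) :
    Clone Γ (crisp {x : Fin n → ℚ | x i < x j}) := by
  convert hlt.minor ![i, j] using 2 with x
  simp [crisp, LtS]

/-! ### Producing `Cyc` -/

/-- The indicator of `≥` (up to rescaling its two values) yields `Cyc`: the sum around the
triangle counts descents, and exactly the tuples in `Cyc` have only one. -/
theorem Clone.cyc_of_indicator {m q : ℚ} (hmq : m < q)
    (hG : Clone Γ (fun t : Fin 2 → ℚ => if t 0 < t 1 then (m : WithTop ℚ) else (q : WithTop ℚ))) :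
    Clone Γ (crisp CycS) := by
  have h := (((hG.minor ![(0 : Fin 3), 1]).add (hG.minor ![(1 : Fin 3), 2])).add
    (hG.minor ![(2 : Fin 3), 0])).opt
  simp only [Matrix.cons_val_zero, Matrix.cons_val_one] at h
  set H : VRel 3 := fun t => (if t 0 < t 1 then (m : WithTop ℚ) else (q : WithTop ℚ)) +
    (if t 1 < t 2 then (m : WithTop ℚ) else (q : WithTop ℚ)) +
    (if t 2 < t 0 then (m : WithTop ℚ) else (q : WithTop ℚ)) with hH
  have hin : ∀ t ∈ CycS, H t = ((2 * m + q : ℚ) : WithTop ℚ) := by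
    rintro t (⟨h1, h2⟩ | ⟨h1, h2⟩ | ⟨h1, h2⟩)
    · simp only [hH, h1, h2, (h1.trans h2).not_gt, if_true, if_false]
      norm_cast; ring
    · simp only [hH, h1, h2, (h1.trans h2).not_gt, if_true, if_false]
      norm_cast; ring
    · simp only [hH, h1, h2, (h1.trans h2).not_gt, if_true, if_false]
      norm_cast; ring
  have hout : ∀ t ∉ CycS, ((m + 2 * q : ℚ) : WithTop ℚ) ≤ H t := by
    intro t ht
    simp only [CycS, Set.mem_ofPred_eq, not_or, not_and] at ht
    obtain ⟨h1, h2, h3⟩ := ht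
    simp only [hH]
    split_ifs <;> first | tauto | (norm_cast; linarith)
  have hlt : ((2 * m + q : ℚ) : WithTop ℚ) < ((m + 2 * q : ℚ) : WithTop ℚ) := by
    norm_cast; linarith
  have h012 : (![0, 1, 2] : Fin 3 → ℚ) ∈ CycS := by left; simp
  convert h using 2 with t
  by_cases ht : t ∈ CycS
  · have : H t ≠ ⊤ ∧ ∀ s, H t ≤ H s := by
      rw [hin t ht]
      refine ⟨WithTop.coe_ne_top, fun s => ?_⟩
      by_cases hs : s ∈ CycS
      · rw [hin s hs]
      · exact hlt.le.trans (hout s hs)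
    rw [crisp, if_pos ht]
    exact (if_pos this).symm
  · have : ¬ (H t ≠ ⊤ ∧ ∀ s, H t ≤ H s) := by
      rintro ⟨_, hmin⟩
      have := hmin ![0, 1, 2]
      rw [hin _ h012] at this
      exact absurd (hout t ht) (this.trans_lt hlt).not_ge
    rw [crisp, if_neg ht]
    exact (if_neg this).symm

/-- The projection gadget. Suppose `R` exceeds its value at some `w₀ ∈ F` on all tuples of `F`
with `w i < w j`, attaining there the value `R u` as minimum. Then minimising `R w` over `w ∈ F`
with `w j = x` and `w i < y` gives the minimum of `R` on `F` if `x < y`, and gives `R u` if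
`y ≤ x`, since then `w i < w j`. -/
theorem Clone.cyc_of_pair (hlt : Clone Γ (crisp LtS)) {k : ℕ} {R : VRel k} (hR : Clone Γ R)
    (hT : Temporal R) {F : Set (Fin k → ℚ)} (hF : Clone Γ (crisp F))
    (hFinv : ∀ a b : ℚ, 0 < a → ∀ w ∈ F, (fun i => a * w i + b) ∈ F)
    {u w₀ : Fin k → ℚ} (huF : u ∈ F) (hu : R u ≠ ⊤) (hw₀ : w₀ ∈ F) (hw₀u : R w₀ < R u)
    (i j : Fin k) (huij : u i < u j) (hmin : ∀ w ∈ F, w i < w j → R u ≤ R w) :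
    Clone Γ (crisp CycS) := by
  obtain ⟨_, ⟨w, hwF, rfl⟩, hw⟩ := Set.exists_min_image (R '' F) id
    (hT.finite_range.subset (Set.image_subset_range _ _)) ⟨_, w₀, hw₀, rfl⟩
  have hw : ∀ v ∈ F, R w ≤ R v := fun v hv => hw _ ⟨v, hv, rfl⟩
  have hwu : R w < R u := (hw _ hw₀).trans_lt hw₀u
  obtain ⟨q, hq⟩ := WithTop.ne_top_iff_exists.1 hu
  obtain ⟨m, hm⟩ := WithTop.ne_top_iff_exists.1 (hwu.trans_le le_top).ne
  have hmq : m < q := by rw [← hm, ← hq] at hwu; exact_mod_cast hwu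
  refine Clone.cyc_of_indicator hmq ?_
  have hbig : Clone Γ (fun z : Fin (2 + k) → ℚ =>
      R (fun a => z (Fin.natAdd 2 a)) +
        (crisp F (fun a => z (Fin.natAdd 2 a)) +
          crisp ({z : Fin (2 + k) → ℚ | z (Fin.natAdd 2 j) = z (Fin.castAdd k 0)} ∩
            {z | z (Fin.natAdd 2 i) < z (Fin.castAdd k 1)}) z)) :=
    (hR.minor _).add ((hF.minor _).add ((Clone.eqAt _ _).inter (hlt.ltAt _ _)))
  refine hbig.proj fun s => ?_
  have hval : ∀ v : Fin k → ℚ,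
      (R (fun a => Fin.append s v (Fin.natAdd 2 a)) +
        (crisp F (fun a => Fin.append s v (Fin.natAdd 2 a)) +
          crisp ({z : Fin (2 + k) → ℚ | z (Fin.natAdd 2 j) = z (Fin.castAdd k 0)} ∩
            {z | z (Fin.natAdd 2 i) < z (Fin.castAdd k 1)}) (Fin.append s v))) =
      if v ∈ F ∧ v j = s 0 ∧ v i < s 1 then R v else ⊤ := by
    intro v
    simp only [Fin.append_right, crisp, Set.mem_inter_iff, Set.mem_ofPred_eq, Fin.append_left]
    by_cases h1 : v ∈ F <;> by_cases h2 : v j = s 0 ∧ v i < s 1 <;> simp [h1, h2]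
  simp only [hval]
  -- The bound is attained by an affine image of `w` or of `u`.
  have key : ∀ (r : WithTop ℚ) (v : Fin k → ℚ) (a b : ℚ), 0 < a → v ∈ F → R v = r →
      a * v j + b = s 0 → a * v i + b < s 1 →
      (∀ v' ∈ F, v' j = s 0 → v' i < s 1 → r ≤ R v') →
      IsGLB {x | ∃ t : Fin k → ℚ, x = if t ∈ F ∧ t j = s 0 ∧ t i < s 1 then R t else ⊤} r := by
    intro r v a b ha hv hr hj hi hle
    refine IsLeast.isGLB ⟨⟨fun i => a * v i + b, ?_⟩, ?_⟩
    · rw [if_pos ⟨hFinv a b ha v hv, hj, hi⟩, hT.affine a b ha, hr]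
    · rintro _ ⟨t, rfl⟩
      split_ifs with h
      · exact hle t h.1 h.2.1 h.2.2
      · exact le_top
  split_ifs with hs
  · rcases le_or_gt (w i) (w j) with hij | hij
    · exact key _ w 1 (s 0 - w j) one_pos hwF hm.symm (by ring) (by linarith)
        fun v hv _ _ => hm ▸ hw v hv
    · -- Shrink `w` so that the positive gap `w i - w j` fits into half of `(s 0, s 1)`.
      have hd : 0 < w i - w j := sub_pos.2 hij
      have he : 0 < s 1 - s 0 := sub_pos.2 hs
      refine key _ w ((s 1 - s 0) / (2 * (w i - w j)))
        (s 0 - (s 1 - s 0) / (2 * (w i - w j)) * w j) (by positivity) hwF hm.symm (by ring) ?_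
        fun v hv _ _ => hm ▸ hw v hv
      have : (s 1 - s 0) / (2 * (w i - w j)) * (w i - w j) = (s 1 - s 0) / 2 := by
        field_simp
      linarith
  · -- Stretch `u` so that the gap `u j - u i` exceeds `s 0 - s 1`.
    have hd : 0 < u j - u i := sub_pos.2 huij
    have he : 0 ≤ s 0 - s 1 := by linarith
    refine key _ u ((s 0 - s 1 + 1) / (u j - u i))
      (s 0 - (s 0 - s 1 + 1) / (u j - u i) * u j) (by positivity) huF hq.symm (by ring) ?_
      fun v hv h1 h2 => ?_
    · have : (s 0 - s 1 + 1) / (u j - u i) * (u j - u i) = s 0 - s 1 + 1 := by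
        field_simp
      linarith
    · rw [hq]
      exact hmin v hv (by linarith)

/-- The tuples identifying every pair of coordinates that `u` identifies, and ordered strictly
along all pairs in `A`. -/
def refineSet {k : ℕ} (u : Fin k → ℚ) (A : Finset (Fin k × Fin k)) : Set (Fin k → ℚ) :=
  {w | ∀ p ∈ Finset.univ.filter (fun p : Fin k × Fin k => u p.1 = u p.2), w p.1 = w p.2} ∩
    {w | ∀ p ∈ A, w p.1 < w p.2}

theorem Clone.refineSet (hlt : Clone Γ (crisp LtS)) {k : ℕ} (u : Fin k → ℚ)
    (A : Finset (Fin k × Fin k)) : Clone Γ (crisp (refineSet u A)) :=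
  (Clone.biInter _ (fun p : Fin k × Fin k => {w : Fin k → ℚ | w p.1 = w p.2})
      fun p _ => Clone.eqAt p.1 p.2).inter
    (Clone.biInter A (fun p : Fin k × Fin k => {w : Fin k → ℚ | w p.1 < w p.2})
      fun p _ => hlt.ltAt p.1 p.2)

/-- If `w` identifies all coordinates that `u` identifies and `R w < R u < ∞`, then imposing the
strict inequalities of `u` one by one must at some step destroy all values below `R u`: once all
are imposed, only the order type of `u` remains. -/
theorem Clone.cyc_of_lt (hlt : Clone Γ (crisp LtS)) {k : ℕ} {R : VRel k} (hR : Clone Γ R)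
    (hT : Temporal R) {u w : Fin k → ℚ} (hu : R u ≠ ⊤) (hker : ∀ i j, u i = u j → w i = w j)
    (hwu : R w < R u) : Clone Γ (crisp CycS) := by
  by_contra hcyc
  have step : ∀ A : Finset (Fin k × Fin k), (∀ p ∈ A, u p.1 < u p.2) →
      ∃ v ∈ _root_.refineSet u A, R v < R u := by
    intro A
    induction A using Finset.induction_on with
    | empty => exact fun _ => ⟨w, by simpa [_root_.refineSet] using hker, hwu⟩
    | insert p A _ ih =>
      intro hA
      have hA' : ∀ p ∈ A, u p.1 < u p.2 := fun p hp => hA p (by simp [hp])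
      obtain ⟨v, hv, hvu⟩ := ih hA'
      by_contra! hno
      refine hcyc (Clone.cyc_of_pair hlt hR hT (hlt.refineSet u A) ?_ ?_ hu hv hvu p.1 p.2
        (hA p (by simp)) ?_)
      · rintro a b ha v ⟨h1, h2⟩
        refine ⟨fun p hp => ?_, fun p hp => ?_⟩
        · have := h1 p hp
          simp only [this]
        · have := mul_lt_mul_of_pos_left (h2 p hp) ha
          simpa using this
      · exact ⟨fun p hp => by simpa using hp, hA'⟩
      · rintro v ⟨h1, h2⟩ hp
        refine hno v ⟨h1, fun p' hp' => ?_⟩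
        rcases Finset.mem_insert.1 hp' with rfl | hp'
        · exact hp
        · exact h2 p' hp'
  obtain ⟨v, ⟨h1, h2⟩, hv⟩ := step (Finset.univ.filter fun p => u p.1 < u p.2) (by simp)
  simp only [Finset.mem_filter, Finset.mem_univ, true_and, Prod.forall, Set.mem_ofPred_eq]
    at h1 h2
  refine hv.ne (hT.eq_of_orderType fun i j => ⟨fun h => ?_, h2 i j⟩)
  rcases lt_trichotomy (u i) (u j) with h' | h' | h'
  · exact h'
  · exact absurd (h1 i j h') h.ne
  · exact absurd (h2 j i h') h.not_gt

end Closure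

/-- If `⟨Γ⟩` contains crisp `<`, every crisp relation in `⟨Γ⟩` is preserved by every
lex-operation, and some lex-operation fails to improve some relation of `Γ`, then `⟨Γ⟩`
contains the crisp relation `Cyc`. -/
theorem stmt14 (Γ : Set ((k : ℕ) × VRel k)) (hT : ∀ p ∈ Γ, Temporal p.2)
    (hlt : Clone Γ (crisp LtS))
    (hpres : ∀ (k : ℕ) (R : VRel k), Clone Γ R → (∀ t, R t = 0 ∨ R t = ⊤) →
      ∀ l : ℚ → ℚ → ℚ, IsLex l → ∀ s t : Fin k → ℚ,
        R s = 0 → R t = 0 → R (fun i => l (s i) (t i)) = 0)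
    (hfail : ∃ l : ℚ → ℚ → ℚ, IsLex l ∧ ∃ p ∈ Γ, ¬ Improves2 l p.2) :
    Clone Γ (crisp CycS) := by
  obtain ⟨l, hl, ⟨k, R⟩, hRΓ, hni⟩ := hfail
  have hR : Clone Γ R := Clone.base hRΓ
  have hTR : Temporal R := hT _ hRΓ
  simp only [Improves2, not_forall, not_le] at hni
  obtain ⟨s, t, hst⟩ := hni
  set u : Fin k → ℚ := fun i => l (s i) (t i) with hu
  have hs : R s ≠ ⊤ := fun h => by simp [h] at hst
  have ht : R t ≠ ⊤ := fun h => by simp [h] at hst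
  have hu_top : R u ≠ ⊤ := by
    have := hpres k _ hR.feas (fun t => by by_cases h : R t = ⊤ <;> simp [h]) l hl s t
      (if_pos hs) (if_pos ht)
    intro h
    simp [← hu, h] at this
  -- A lex-operation is injective, so `u` identifies only coordinates that `s` and `t` identify.
  have hinj : ∀ i j, u i = u j → s i = s j ∧ t i = t j := by
    intro i j hij
    have h1 := (hl (s i) (s j) (t i) (t j)).not.1 hij.not_lt
    have h2 := (hl (s j) (s i) (t j) (t i)).not.1 hij.not_gt
    push Not at h1 h2
    have h3 : s i = s j := le_antisymm h2.1 h1.1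
    exact ⟨h3, le_antisymm (h2.2 h3.symm) (h1.2 h3)⟩
  rcases lt_or_ge (R s) (R u) with h | h
  · exact hlt.cyc_of_lt hR hTR hu_top (fun i j hij => (hinj i j hij).1) h
  rcases lt_or_ge (R t) (R u) with h' | h'
  · exact hlt.cyc_of_lt hR hTR hu_top (fun i j hij => (hinj i j hij).2) h'
  · exact absurd hst (not_lt.2 (by rw [two_nsmul]; exact add_le_add h h'))
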